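/- arXiv:1108.4662 — 3 statements merged into one kernel-verified Lean document; each statement's English description precedes it below -/
import Mathlib

section
/- Let (γ_k)_{k=0}^∞ be a Legendre multiplier sequence. Then either γ_k·γ_{k+1} ≥ 0 for all k ≥ 0 (the terms are all of the same sign), or γ_k·γ_{k+1} ≤ 0 for all k ≥ 0 (the terms alternate in sign). -/
open Polynomial

/-- A real polynomial is *hyperbolic* if all of its complex roots are real
(the zero polynomial and nonzero constants are vacuously hyperbolic). -/
def Hyperbolic (p : Polynomial ℝ) : Prop :=
  ∀ z ∈ (p.map (algebraMap ℝ ℂ)).roots, z.im = 0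

/-- `γ` is a multiplier sequence for the simple set `q`: the linear operator
sending `q k` to `γ k • q k` maps hyperbolic polynomials to hyperbolic
polynomials.  (Since `q` is a simple set, every real polynomial has a unique
expansion `∑ a k • q k`, so this quantification over coefficient families
expresses exactly that property.) -/
def IsMultiplierSeqFor (q : ℕ → Polynomial ℝ) (γ : ℕ → ℝ) : Prop :=
  ∀ (n : ℕ) (a : ℕ → ℝ),
    Hyperbolic (∑ k ∈ Finset.range n, C (a k) * q k) →
    Hyperbolic (∑ k ∈ Finset.range n, C (γ k * a k) * q k)

/-- The Legendre polynomials, via Rodrigues' formula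
`Le n = (1/(2^n n!)) Dⁿ[(x²-1)ⁿ]`. -/
noncomputable def legendre (n : ℕ) : Polynomial ℝ :=
  C (1 / (2 ^ n * n.factorial : ℝ)) * derivative^[n] ((X ^ 2 - 1) ^ n)

/-- A Legendre multiplier sequence. -/
def IsLegendreMS (γ : ℕ → ℝ) : Prop := IsMultiplierSeqFor legendre γ

theorem hyp_of_eval (p : Polynomial ℝ) (h : ∀ z : ℂ, aeval z p = 0 → z.im = 0) :
    Hyperbolic p := by
  intro z hz
  apply h
  have := Polynomial.isRoot_of_mem_roots hz
  rwa [IsRoot, eval_map_algebraMap] at this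

theorem hyp_lower (P : Polynomial ℝ) (hP : Hyperbolic P) (z : ℂ) :
    |P.leadingCoeff| * |z.im| ^ P.natDegree ≤ ‖aeval z P‖ := by
  set Q := P.map (algebraMap ℝ ℂ) with hQ
  have hs : Q.Splits := IsAlgClosed.splits Q
  have hlc : Q.leadingCoeff = (P.leadingCoeff : ℂ) := by
    simp [hQ]
  have hdeg : Q.roots.card = P.natDegree := by
    rw [← hs.natDegree_eq_card_roots, hQ, natDegree_map]
  have hev : aeval z P = Q.leadingCoeff * (Q.roots.map (fun a => z - a)).prod := by
    rw [← eval_map_algebraMap]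
    exact hs.eval_eq_prod_roots z
  rw [hev, norm_mul, hlc, Complex.norm_real, Real.norm_eq_abs]
  apply mul_le_mul_of_nonneg_left _ (abs_nonneg _)
  rw [← hdeg]
  have key : ∀ s : Multiset ℂ, (∀ a ∈ s, a.im = 0) →
      |z.im| ^ s.card ≤ ‖(s.map (fun a => z - a)).prod‖ := by
    intro s
    induction s using Multiset.induction_on with
    | empty => simp
    | cons a s ih =>
      intro hs
      have h1 := ih (fun b hb => hs b (Multiset.mem_cons_of_mem hb))
      have h2 : |z.im| ≤ ‖z - a‖ := by
        have := Complex.abs_im_le_norm (z - a)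
        simpa [hs a (Multiset.mem_cons_self a s)] using this
      rw [Multiset.card_cons, Multiset.map_cons, Multiset.prod_cons, norm_mul, pow_succ, mul_comm]
      exact mul_le_mul h2 h1 (by positivity) (norm_nonneg _)
  exact key _ hP

theorem legendre_coeff (n m : ℕ) : (legendre n).coeff m =
    (1 / (2 ^ n * n.factorial : ℝ)) *
      (((m + n).descFactorial n : ℝ) * ((X ^ 2 - 1 : ℝ[X]) ^ n).coeff (m + n)) := by
  rw [legendre, coeff_C_mul, coeff_iterate_derivative, nsmul_eq_mul]

theorem base_deg (n : ℕ) : ((X ^ 2 - 1 : ℝ[X]) ^ n).natDegree = n + n := by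
  rw [natDegree_pow, ← C_1, natDegree_X_pow_sub_C]; ring

theorem legendre_coeff_self (n : ℕ) : (legendre n).coeff n ≠ 0 := by
  rw [legendre_coeff]
  have hm : ((X ^ 2 - 1 : ℝ[X]) ^ n).Monic := by
    apply Monic.pow
    rw [← C_1]; exact monic_X_pow_sub_C _ two_ne_zero
  have : ((X ^ 2 - 1 : ℝ[X]) ^ n).coeff (n + n) = 1 := by
    rw [← base_deg n]; exact hm
  rw [this]
  have h2 : ((n + n).descFactorial n : ℝ) ≠ 0 := by
    exact_mod_cast (Nat.descFactorial_pos.2 (by omega)).ne'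
  have : (n.factorial : ℝ) ≠ 0 := by exact_mod_cast n.factorial_ne_zero
  positivity

theorem legendre_coeff_gt (n m : ℕ) (h : n < m) : (legendre n).coeff m = 0 := by
  rw [legendre_coeff, coeff_eq_zero_of_natDegree_lt (by rw [base_deg]; omega)]
  simp

theorem expand (N : ℕ) : ∀ p : ℝ[X], (∀ m, N ≤ m → p.coeff m = 0) →
    ∃ b : ℕ → ℝ, p = ∑ j ∈ Finset.range N, C (b j) * legendre j := by
  induction N with
  | zero =>
    intro p hp
    refine ⟨0, ?_⟩
    ext m
    simp [hp m]
  | succ N ih =>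
    intro p hp
    set c := p.coeff N / (legendre N).coeff N with hc
    obtain ⟨b, hb⟩ := ih (p - C c * legendre N) (by
      intro m hm
      rw [coeff_sub, coeff_C_mul]
      rcases hm.eq_or_lt with rfl | hm
      · rw [hc, div_mul_cancel₀ _ (legendre_coeff_self N), sub_self]
      · rw [hp m hm, legendre_coeff_gt _ _ hm]; simp)
    refine ⟨fun j => if j = N then c else b j, ?_⟩
    rw [Finset.sum_range_succ]
    have : ∑ x ∈ Finset.range N, C (if x = N then c else b x) * legendre x =
        ∑ j ∈ Finset.range N, C (b j) * legendre j := by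
      apply Finset.sum_congr rfl
      intro x hx
      rw [if_neg (by have := Finset.mem_range.1 hx; omega)]
    simp only [this, if_true]
    rw [← hb]; ring

theorem expandX (k : ℕ) : ∃ b : ℕ → ℝ, (∀ j, k < j → b j = 0) ∧
    b k * (legendre k).coeff k = 1 ∧
    ∀ N, k < N → (X ^ k : ℝ[X]) = ∑ j ∈ Finset.range N, C (b j) * legendre j := by
  obtain ⟨b, hb⟩ := expand (k + 1) (X ^ k) (by
    intro m hm; rw [coeff_X_pow, if_neg (by omega)])
  refine ⟨fun j => if j ≤ k then b j else 0, ?_, ?_, ?_⟩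
  · intro j hj; simp [hj]
  · have := congrArg (fun p => coeff p k) hb
    simp only [coeff_X_pow_self, finsetSum_coeff, coeff_C_mul] at this
    rw [Finset.sum_range_succ, Finset.sum_eq_zero] at this
    · simp [this]
    · intro x hx
      rw [legendre_coeff_gt _ _ (Finset.mem_range.1 hx), mul_zero]
  · intro N hN
    rw [hb]
    apply Finset.sum_subset_zero_on_sdiff
    · intro x; simp; omega
    · intro x hx
      simp at hx
      simp [show ¬ x ≤ k by omega]
    · intro x hx
      simp at hx
      simp [show x ≤ k by omega]

theorem classical_of (γ : ℕ → ℝ) (h : IsLegendreMS γ) (f : ℝ[X])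
    (hf : ∀ z : ℂ, aeval z f = 0 → z.im = 0) (hf0 : f ≠ 0) (hγ : γ f.natDegree ≠ 0) (z : ℂ)
    (hz : ∑ k ∈ Finset.range (f.natDegree + 1), (f.coeff k : ℂ) * γ k * z ^ k = 0) :
    z.im = 0 := by
  set N := f.natDegree with hN
  choose b hb0 hb1 hbX using expandX
  -- the image of `X ^ k`
  set q : ℕ → ℝ[X] := fun k => ∑ j ∈ Finset.range (N + 1), C (γ j * b k j) * legendre j with hq
  have hqgt : ∀ k i, k < i → (q k).coeff i = 0 := by
    intro k i hki
    simp only [hq, finsetSum_coeff, coeff_C_mul]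
    apply Finset.sum_eq_zero
    intro j _
    rcases le_or_gt j k with hj | hj
    · rw [legendre_coeff_gt _ _ (by omega), mul_zero]
    · rw [hb0 k j hj]; simp
  have hqself : ∀ k, k ≤ N → (q k).coeff k = γ k := by
    intro k hk
    simp only [hq, finsetSum_coeff, coeff_C_mul]
    rw [Finset.sum_eq_single k]
    · rw [mul_assoc, hb1, mul_one]
    · intro j _ hj
      rcases lt_or_gt_of_ne hj with hj | hj
      · rw [legendre_coeff_gt _ _ (by omega), mul_zero]
      · rw [hb0 k j hj]; simp
    · intro hk'; simp at hk'; omega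
  let P : ℝ → ℝ[X] := fun ε => ∑ k ∈ Finset.range (N + 1), C (f.coeff k * ε ^ k) * q k
  have hPhyp : ∀ ε, 0 < ε → Hyperbolic (P ε) := by
    intro ε hε
    have h1 := h (N + 1) (fun j => ∑ k ∈ Finset.range (N + 1), f.coeff k * ε ^ k * b k j) ?_
    · convert h1 using 1
      simp only [P, hq, Finset.mul_sum, map_sum, Finset.sum_mul]
      rw [Finset.sum_comm]
      refine Finset.sum_congr rfl fun j _ => Finset.sum_congr rfl fun k _ => ?_
      simp only [map_mul]; ring
    · have : ∑ j ∈ Finset.range (N + 1),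
          C (∑ k ∈ Finset.range (N + 1), f.coeff k * ε ^ k * b k j) * legendre j
          = ∑ k ∈ Finset.range (N + 1), C (f.coeff k * ε ^ k) * X ^ k := by
        simp only [map_sum, Finset.sum_mul]
        rw [Finset.sum_comm]
        refine Finset.sum_congr rfl fun k hk => ?_
        rw [hbX k (N + 1) (Finset.mem_range.1 hk), Finset.mul_sum]
        refine Finset.sum_congr rfl fun j _ => ?_
        simp only [map_mul]; ring
      rw [this]
      apply hyp_of_eval
      intro w hw
      have h2 : aeval ((ε : ℂ) * w) f = 0 := by
        rw [aeval_eq_sum_range, ← hw, map_sum]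
        refine Finset.sum_congr rfl fun k _ => ?_
        simp [mul_pow, mul_assoc]
      have := hf _ h2
      simpa [hε.ne'] using this
  have hPcoeff : ∀ ε i, N < i → (P ε).coeff i = 0 := by
    intro ε i hi
    simp only [P, finsetSum_coeff, coeff_C_mul]
    apply Finset.sum_eq_zero
    intro k hk
    rw [hqgt k i (by have := Finset.mem_range.1 hk; omega), mul_zero]
  have hPN : ∀ ε, (P ε).coeff N = f.leadingCoeff * ε ^ N * γ N := by
    intro ε
    simp only [P, finsetSum_coeff, coeff_C_mul]
    rw [Finset.sum_range_succ, Finset.sum_eq_zero, zero_add, hqself N le_rfl]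
    · rfl
    · intro k hk
      rw [hqgt k N (Finset.mem_range.1 hk), mul_zero]
  have hlc : f.leadingCoeff ≠ 0 := leadingCoeff_ne_zero.2 hf0
  have hPdeg : ∀ ε, 0 < ε → (P ε).natDegree = N := by
    intro ε hε
    apply natDegree_eq_of_le_of_coeff_ne_zero
    · rw [natDegree_le_iff_coeff_eq_zero]
      exact hPcoeff ε
    · rw [hPN]
      exact mul_ne_zero (mul_ne_zero hlc (pow_pos hε _).ne') hγ
  let G : ℝ → ℂ := fun ε => ∑ k ∈ Finset.range (N + 1), (f.coeff k : ℂ) *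
    ∑ i ∈ Finset.range (k + 1), ((q k).coeff i : ℂ) * (ε : ℂ) ^ (k - i) * z ^ i
  have hG : ∀ ε : ℝ, 0 < ε → aeval (z / ε) (P ε) = G ε := by
    intro ε hε
    have hεc : (ε : ℂ) ≠ 0 := by exact_mod_cast hε.ne'
    simp only [P, G, map_sum, map_mul]
    refine Finset.sum_congr rfl fun k _ => ?_
    have hd : (q k).natDegree < k + 1 := by
      rw [Nat.lt_succ_iff, natDegree_le_iff_coeff_eq_zero]; exact hqgt k
    rw [aeval_eq_sum_range' hd, Finset.mul_sum, Finset.mul_sum]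
    refine Finset.sum_congr rfl fun i hi => ?_
    have hi' : i ≤ k := by have := Finset.mem_range.1 hi; omega
    have : (ε : ℂ) ^ k = (ε : ℂ) ^ (k - i) * (ε : ℂ) ^ i := by
      rw [← pow_add]; congr 1; omega
    simp [this, div_pow]
    field_simp
  have hlow : ∀ ε : ℝ, 0 < ε → |f.leadingCoeff| * |γ N| * |z.im| ^ N ≤ ‖G ε‖ := by
    intro ε hε
    have h1 := hyp_lower (P ε) (hPhyp ε hε) (z / ε)
    rw [hG ε hε, leadingCoeff, hPdeg ε hε, hPN, Complex.div_ofReal_im] at h1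
    refine le_trans (le_of_eq ?_) h1
    rw [abs_mul, abs_mul, abs_div, div_pow, abs_pow, abs_of_pos hε]
    field_simp
  have hcont : Continuous G := by
    simp only [G]; fun_prop
  have hG0 : G 0 = 0 := by
    rw [← hz]
    simp only [G]
    refine Finset.sum_congr rfl fun k hk => ?_
    rw [Finset.sum_range_succ, Finset.sum_eq_zero, hqself k (by have := Finset.mem_range.1 hk; omega)]
    · simp [mul_assoc]
    · intro i hi
      have := Finset.mem_range.1 hi
      simp [show k - i ≠ 0 by omega]
  have hlim : Filter.Tendsto (fun ε => ‖G ε‖) (nhdsWithin 0 (Set.Ioi 0)) (nhds ‖G 0‖) :=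
    (hcont.norm.tendsto 0).mono_left nhdsWithin_le_nhds
  have hfin := ge_of_tendsto hlim (Filter.eventually_of_mem self_mem_nhdsWithin
    (fun ε hε => hlow ε hε))
  rw [hG0, norm_zero] at hfin
  by_contra hne
  have : 0 < |f.leadingCoeff| * |γ N| * |z.im| ^ N := by positivity
  linarith

theorem classical_shift (γ : ℕ → ℝ) (h : IsLegendreMS γ) (i n : ℕ) (g : ℝ[X])
    (hg : ∀ z : ℂ, aeval z g = 0 → z.im = 0) (hn : g.natDegree = n) (hg0 : g ≠ 0)
    (hγ : γ (i + n) ≠ 0) (z : ℂ)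
    (hz : ∑ k ∈ Finset.range (n + 1), (g.coeff k : ℂ) * γ (i + k) * z ^ k = 0) :
    z.im = 0 := by
  have hd : (X ^ i * g).natDegree = i + n := by
    rw [natDegree_mul (pow_ne_zero _ X_ne_zero) hg0, natDegree_X_pow, hn]
  apply classical_of γ h (X ^ i * g)
  · intro w hw
    simp only [map_mul, map_pow, aeval_X, mul_eq_zero] at hw
    rcases hw with hw | hw
    · rw [eq_zero_of_pow_eq_zero hw]; simp
    · exact hg w hw
  · exact mul_ne_zero (pow_ne_zero _ X_ne_zero) hg0
  · rwa [hd]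
  · rw [hd, add_assoc, Finset.sum_range_add, Finset.sum_eq_zero, zero_add]
    · have : ∑ x ∈ Finset.range (n + 1),
          (((X ^ i * g).coeff (i + x) : ℝ) : ℂ) * γ (i + x) * z ^ (i + x) =
          z ^ i * ∑ k ∈ Finset.range (n + 1), (g.coeff k : ℂ) * γ (i + k) * z ^ k := by
        rw [Finset.mul_sum]
        refine Finset.sum_congr rfl fun k _ => ?_
        rw [add_comm i k, coeff_X_pow_mul, pow_add]; ring
      rw [this, hz, mul_zero]
    · intro k hk
      rw [coeff_X_pow_mul', if_neg (by have := Finset.mem_range.1 hk; omega)]; simp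

theorem sq_root (c : ℝ) (hc : 0 < c) : ∃ z : ℂ, z ^ 2 = -(c : ℂ) ∧ z.im ≠ 0 := by
  refine ⟨Complex.I * (Real.sqrt c : ℝ), ?_, ?_⟩
  · rw [mul_pow, Complex.I_sq, ← Complex.ofReal_pow, Real.sq_sqrt hc.le]; ring
  · simp [(Real.sqrt_pos.2 hc).ne']

theorem two_step (γ : ℕ → ℝ) (h : IsLegendreMS γ) (k : ℕ) : 0 ≤ γ k * γ (k + 2) := by
  by_contra! hneg
  have h2 : γ (k + 2) ≠ 0 := by rintro h2; simp [h2] at hneg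
  obtain ⟨z, hz, him⟩ := sq_root (-(γ k / γ (k + 2))) (by
    have : γ k / γ (k + 2) = γ k * γ (k + 2) / (γ (k + 2)) ^ 2 := by field_simp
    rw [this, ← neg_div]
    have : 0 < (γ (k + 2)) ^ 2 := by positivity
    apply div_pos <;> linarith)
  apply him
  apply classical_shift γ h k 2 (X ^ 2 - C 1)
  · intro w hw
    have h1 : (w - 1) * (w + 1) = 0 := by
      have : w ^ 2 - 1 = 0 := by simpa using hw
      rw [← this]; ring
    rcases mul_eq_zero.1 h1 with h1 | h1
    · rw [sub_eq_zero.1 h1]; simp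
    · rw [eq_neg_of_add_eq_zero_left h1]; simp
  · exact natDegree_X_pow_sub_C
  · exact (monic_X_pow_sub_C _ two_ne_zero).ne_zero
  · exact h2
  · have hc : (γ (k + 2) : ℂ) ≠ 0 := by exact_mod_cast h2
    simp [Finset.sum_range_succ, coeff_X_pow, coeff_one, hz, -map_one, coeff_C]
    field_simp
    ring

theorem no_gap (γ : ℕ → ℝ) (h : IsLegendreMS γ) (i n : ℕ) (hi : γ i ≠ 0) (hn : 2 ≤ n)
    (hin : γ (i + n) ≠ 0) : ∃ m, 0 < m ∧ m < n ∧ γ (i + m) ≠ 0 := by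
  by_contra! hcon
  have hc : (γ (i + n) : ℂ) ≠ 0 := by exact_mod_cast hin
  have hci : (γ i : ℂ) ≠ 0 := by exact_mod_cast hi
  have key : ∀ z : ℂ, z ^ n = -(γ i / γ (i + n)) → z.im = 0 := by
    intro z hz
    have hd : ((X + C 1 : ℝ[X]) ^ n).natDegree = n := by
      rw [natDegree_pow, natDegree_X_add_C, mul_one]
    apply classical_shift γ h i n ((X + C 1) ^ n)
    · intro w hw
      have h1 : w + 1 = 0 := by
        have : (w + 1) ^ n = 0 := by simpa using hw
        exact eq_zero_of_pow_eq_zero this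
      rw [eq_neg_of_add_eq_zero_left h1]; simp
    · exact hd
    · exact ((monic_X_add_C 1).pow n).ne_zero
    · exact hin
    · obtain ⟨n, rfl⟩ : ∃ m, n = m + 1 := ⟨n - 1, by omega⟩
      rw [Finset.sum_range_succ, Finset.sum_range_succ', Finset.sum_eq_zero]
      · rw [hz]
        simp only [map_one, coeff_X_add_one_pow]
        simp
        field_simp
        ring
      · intro k hk
        rw [hcon (k + 1) (by omega) (by have := Finset.mem_range.1 hk; omega)]
        simp
  rcases hn.eq_or_lt with rfl | hn
  · have hpos : 0 < γ i / γ (i + 2) := by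
      have := two_step γ h i
      have h3 : 0 < γ i * γ (i + 2) := lt_of_le_of_ne this (mul_ne_zero hi hin).symm
      have : γ i / γ (i + 2) = γ i * γ (i + 2) / (γ (i + 2)) ^ 2 := by field_simp
      rw [this]; positivity
    obtain ⟨z, hz, him⟩ := sq_root _ hpos
    exact him (key z (by rw [hz]; push_cast; rfl))
  · obtain ⟨z, hz⟩ := IsAlgClosed.exists_pow_nat_eq (-((γ i : ℂ) / γ (i + n))) (show 0 < n by omega)
    have hz0 : z ≠ 0 := by
      rintro rfl
      rw [zero_pow (by omega)] at hz
      have : (γ i : ℂ) / γ (i + n) ≠ 0 := div_ne_zero hci hc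
      exact this (neg_eq_zero.1 hz.symm)
    have him := key z hz
    have hn0 : (n : ℝ) ≠ 0 := by positivity
    have hn0' : (n : ℂ) ≠ 0 := by exact_mod_cast hn0
    have h2 := key (z * Complex.exp (((2 * Real.pi / n : ℝ) : ℂ) * Complex.I)) (by
      rw [mul_pow, hz, ← Complex.exp_nat_mul]
      have : (n : ℂ) * (((2 * Real.pi / n : ℝ) : ℂ) * Complex.I) = 2 * Real.pi * Complex.I := by
        push_cast; field_simp
      rw [this, Complex.exp_two_pi_mul_I, mul_one])
    rw [Complex.mul_im, him, Complex.exp_ofReal_mul_I_im, zero_mul, add_zero] at h2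
    have hs : 0 < Real.sin (2 * Real.pi / n) := by
      apply Real.sin_pos_of_pos_of_lt_pi
      · have := Real.pi_pos; positivity
      · rw [div_lt_iff₀ (by positivity)]
        have : (3 : ℝ) ≤ n := by exact_mod_cast hn
        nlinarith [Real.pi_pos]
    rcases mul_eq_zero.1 h2 with h2 | h2
    · exact hz0 (Complex.ext h2 him)
    · exact hs.ne' h2

theorem all_between (γ : ℕ → ℝ) (h : IsLegendreMS γ) (n : ℕ) : ∀ i, γ i ≠ 0 → γ (i + n) ≠ 0 →
    ∀ m, m ≤ n → γ (i + m) ≠ 0 := by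
  induction n using Nat.strong_induction_on with
  | _ n ih =>
    intro i hi hin m hm
    rcases Nat.eq_zero_or_pos m with rfl | hm0
    · exact hi
    rcases hm.eq_or_lt with rfl | hmn
    · exact hin
    obtain ⟨p, hp0, hpn, hp⟩ := no_gap γ h i n hi (by omega) hin
    rcases le_total m p with hmp | hmp
    · exact ih p hpn i hi hp m hmp
    · have := ih (n - p) (by omega) (i + p) hp (by rwa [show i + p + (n - p) = i + n by omega])
        (m - p) (by omega)
      rwa [show i + p + (m - p) = i + m by omega] at this

theorem same_sign (γ : ℕ → ℝ) (h : IsLegendreMS γ) (d : ℕ) : ∀ k, γ k * γ (k + 1) ≠ 0 →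
    γ (k + d) * γ (k + d + 1) ≠ 0 → 0 < (γ k * γ (k + 1)) * (γ (k + d) * γ (k + d + 1)) := by
  induction d with
  | zero =>
    intro k hk _
    simpa using mul_self_pos.2 hk
  | succ d ih =>
    intro k hk hkd
    have hb := all_between γ h (d + 2) k (left_ne_zero_of_mul hk) (right_ne_zero_of_mul hkd)
    have h0 := hb d (by omega)
    have h1 := hb (d + 1) (by omega)
    have h2 := hb (d + 2) (by omega)
    have e := ih k hk (mul_ne_zero h0 h1)
    have t : 0 < γ (k + d) * γ (k + d + 2) :=
      lt_of_le_of_ne (two_step γ h (k + d)) (mul_ne_zero h0 h2).symm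
    have e1 : k + (d + 1) = k + d + 1 := by omega
    rw [e1]
    change 0 < γ k * γ (k + 1) * (γ (k + d + 1) * γ (k + d + 2))
    have h3 : 0 < (γ k * γ (k + 1) * (γ (k + d) * γ (k + d + 1))) * (γ (k + d) * γ (k + d + 2)) :=
      mul_pos e t
    have h4 : 0 < (γ (k + d)) ^ 2 := by positivity
    refine (mul_pos_iff_of_pos_right h4).1 ?_
    calc 0 < _ := h3
      _ = _ := by ring

theorem stmt_2 (γ : ℕ → ℝ) (h : IsLegendreMS γ) :
    (∀ k, 0 ≤ γ k * γ (k + 1)) ∨ (∀ k, γ k * γ (k + 1) ≤ 0) := by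
  by_contra! hcon
  obtain ⟨⟨k, hk⟩, ⟨m, hm⟩⟩ := hcon
  have hneg := mul_neg_of_neg_of_pos hk hm
  rcases le_total k m with hkm | hkm
  · obtain ⟨d, rfl⟩ := Nat.exists_eq_add_of_le hkm
    have := same_sign γ h d k hk.ne hm.ne'
    linarith
  · obtain ⟨d, rfl⟩ := Nat.exists_eq_add_of_le hkm
    have := same_sign γ h d m hm.ne' hk.ne
    linarith
end

section
/- If (γ_k)_{k=0}^∞ is a nontrivial Legendre multiplier sequence all of whose terms are non-negative, then the sequence is non-decreasing: γ_k ≤ γ_{k+1} for all k ≥ 0. -/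
open Polynomial

/-- A sequence is a *trivial* (Legendre multiplier) sequence if it is constant
or all of its nonzero terms occur in at most two consecutive positions. -/
def IsTrivialSeq (γ : ℕ → ℝ) : Prop :=
  (∃ c : ℝ, ∀ k, γ k = c) ∨ (∃ n : ℕ, ∀ k, k ≠ n → k ≠ n + 1 → γ k = 0)


lemma hyp_of_splits {p : ℝ[X]} (h : p.Splits) : Hyperbolic p := by
  intro z hz
  rw [h.roots_map] at hz
  obtain ⟨r, _, rfl⟩ := Multiset.mem_map.1 hz
  simp

lemma splits_deriv {p : ℝ[X]} (h : p.Splits) : (derivative p).Splits := by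
  rw [splits_iff_card_roots] at *
  have h1 := card_roots_le_derivative p
  have h2 := card_roots' (derivative p)
  have h3 := natDegree_derivative_le p
  by_cases h0 : p.natDegree = 0
  · rw [natDegree_eq_zero.1 h0 |>.choose_spec.symm]; simp
  · omega

lemma splits_iter_deriv {p : ℝ[X]} (h : p.Splits) (n : ℕ) : (derivative^[n] p).Splits := by
  induction n with
  | zero => simpa
  | succ n ih => rw [Function.iterate_succ_apply']; exact splits_deriv ih

lemma legendre_splits (n : ℕ) : (legendre n).Splits := by
  unfold legendre
  refine Splits.mul (Splits.C _) (splits_iter_deriv (Splits.pow ?_ n) n)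
  have : (X ^ 2 - 1 : ℝ[X]) = (X - C 1) * (X - C (-1)) := by simp; ring
  rw [this]
  exact (Splits.X_sub_C _).mul (Splits.X_sub_C _)

lemma legendre_zero : legendre 0 = 1 := by simp [legendre]

lemma legendre_one : legendre 1 = X := by
  have : (1 + 1:ℝ[X]) = C 2 := by rw [one_add_one_eq_two]; rfl
  simp [legendre]
  rw [this, ← mul_assoc, ← C_mul]; simp

lemma rodrigues_rec (n : ℕ) :
    derivative^[n+2] ((X ^ 2 - 1 : ℝ[X]) ^ (n+2)) =
      C (2 * (2 * (n:ℝ) + 3)) * X * derivative^[n+1] ((X ^ 2 - 1) ^ (n+1))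
      - C (4 * ((n:ℝ)+1)^2) * derivative^[n] ((X ^ 2 - 1) ^ n) := by
  set w : ℝ[X] := (X ^ 2 - 1) ^ (n+1) with hw
  have hdw : derivative w * X = C (2 * (n+1):ℝ) * (w + (X ^ 2 - 1) ^ n) := by
    simp [hw, derivative_pow]; ring
  have h1 := iterate_derivative_derivative_mul_X (n := n) w
  rw [hdw, iterate_derivative_C_mul, iterate_map_add] at h1
  have hd2 : derivative ((X ^ 2 - 1 : ℝ[X]) ^ (n+2)) = C (2 * (n+2):ℝ) * (w * X) := by
    simp [hw, derivative_pow]; ring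
  have h2 : derivative^[n+2] ((X ^ 2 - 1 : ℝ[X]) ^ (n+2)) = C (2 * (n+2):ℝ) *
      ((derivative^[n+1] w) * X + (n+1) • derivative^[n] w) := by
    rw [Function.iterate_succ_apply, hd2, iterate_derivative_C_mul, iterate_derivative_mul_X]
    simp
  rw [h2]
  simp only [nsmul_eq_mul, map_mul, map_add, map_natCast, map_one, map_ofNat, map_pow,
    Nat.cast_add, Nat.cast_one] at h1 ⊢
  linear_combination (2 * (n+1) : ℝ[X]) * h1

lemma legendre_rec (n : ℕ) :
    C ((n:ℝ)+2) * legendre (n+2) =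
      C (2 * (n:ℝ) + 3) * X * legendre (n+1) - C ((n:ℝ)+1) * legendre n := by
  unfold legendre
  rw [rodrigues_rec]
  have hf : ((n.factorial : ℕ) : ℝ) ≠ 0 := by exact_mod_cast n.factorial_ne_zero
  have e2 : ((n+2).factorial : ℝ) = (n+2) * ((n+1) * n.factorial) := by
    rw [Nat.factorial_succ, Nat.factorial_succ]; push_cast; ring
  have e1 : ((n+1).factorial : ℝ) = ((n+1) * n.factorial) := by
    rw [Nat.factorial_succ]; push_cast; ring
  rw [e2, e1]
  have hn1 : (n:ℝ)+1 ≠ 0 := by positivity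
  have hn2 : (n:ℝ)+2 ≠ 0 := by positivity
  set A := derivative^[n+1] ((X ^ 2 - 1 : ℝ[X]) ^ (n+1))
  set B := derivative^[n] ((X ^ 2 - 1 : ℝ[X]) ^ n)
  have c1 : ((n:ℝ)+2) * (1 / (2 ^ (n+2) * ((n+2) * ((n+1) * n.factorial)))) * (2 * (2 * n + 3))
    = (2 * (n:ℝ) + 3) * (1 / (2 ^ (n+1) * ((n+1) * n.factorial))) := by
    field_simp; ring
  have c2 : ((n:ℝ)+2) * (1 / (2 ^ (n+2) * ((n+2) * ((n+1) * n.factorial)))) * (4 * (n+1)^2)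
    = ((n:ℝ) + 1) * (1 / (2 ^ n * n.factorial)) := by
    field_simp; ring
  have d1 := congrArg (fun c => C c * X * A) c1
  have d2 := congrArg (fun c => C c * B) c2
  simp only [C_mul] at d1 d2 ⊢
  linear_combination d1 - d2

lemma legendre_rec' (n : ℕ) :
    legendre (n+2) =
      C ((2 * (n:ℝ) + 3) / (n+2)) * (X * legendre (n+1)) - C (((n:ℝ)+1)/(n+2)) * legendre n := by
  have h := legendre_rec n
  have hn2 : (n:ℝ)+2 ≠ 0 := by positivity
  have h2 := congrArg (fun p => C (((n:ℝ)+2)⁻¹) * p) h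
  simp only [mul_sub, ← mul_assoc, ← C_mul, inv_mul_cancel₀ hn2] at h2
  rw [map_one, one_mul] at h2
  rw [h2, ← mul_assoc, div_eq_inv_mul, div_eq_inv_mul]

lemma legendre_deg_lead (n : ℕ) :
    (legendre n).natDegree ≤ n ∧ 0 < (legendre n).coeff n := by
  induction n using Nat.twoStepInduction with
  | zero => simp [legendre_zero]
  | one => simp [legendre_one]
  | more n ih1 ih2 =>
    rw [legendre_rec']
    constructor
    · refine (natDegree_sub_le _ _).trans (max_le ?_ ?_)
      · refine (natDegree_C_mul_le _ _).trans (natDegree_mul_le.trans ?_)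
        simp; omega
      · exact (natDegree_C_mul_le _ _).trans (by omega)
    · rw [coeff_sub, coeff_C_mul, coeff_C_mul, coeff_X_mul,
        coeff_eq_zero_of_natDegree_lt (p := legendre n) (by omega)]
      have := ih2.2
      simp only [mul_zero, sub_zero]
      positivity

lemma legendre_natDegree (n : ℕ) : (legendre n).natDegree = n :=
  le_antisymm (legendre_deg_lead n).1 (le_natDegree_of_ne_zero (legendre_deg_lead n).2.ne')

noncomputable def legSeq : Polynomial.Sequence ℝ where
  elems' := legendre
  degree_eq' i := by
    rw [degree_eq_natDegree, legendre_natDegree]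
    intro h
    have := (legendre_deg_lead i).2
    simp [h] at this

noncomputable def legBasis : Module.Basis ℕ ℝ ℝ[X] :=
  legSeq.basis (fun i => (leadingCoeff_ne_zero.2 (legSeq.ne_zero i)).isUnit)

lemma legBasis_apply (i : ℕ) : legBasis i = legendre i :=
  legSeq.basis_eq_self _ i

noncomputable def legT (γ : ℕ → ℝ) : ℝ[X] →ₗ[ℝ] ℝ[X] :=
  legBasis.constr ℝ (fun k => C (γ k) * legendre k)

lemma legT_legendre (γ : ℕ → ℝ) (k : ℕ) : legT γ (legendre k) = C (γ k) * legendre k := by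
  rw [← legBasis_apply, legT, Module.Basis.constr_basis, legBasis_apply]

lemma legT_C_mul (γ : ℕ → ℝ) (c : ℝ) (p : ℝ[X]) : legT γ (C c * p) = C c * legT γ p := by
  rw [← smul_eq_C_mul, map_smul, smul_eq_C_mul]

lemma legT_hyp {γ : ℕ → ℝ} (h : IsLegendreMS γ) {p : ℝ[X]} (hp : p.Splits) :
    Hyperbolic (legT γ p) := by
  set a := legBasis.repr p with ha
  obtain ⟨n, hn⟩ : ∃ n, a.support ⊆ Finset.range n := a.support.exists_nat_subset_range
  have e : p = ∑ k ∈ Finset.range n, C (a k) * legendre k := by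
    conv_lhs => rw [← legBasis.linearCombination_repr p, Finsupp.linearCombination_apply,
      Finsupp.sum_of_support_subset _ hn _ (by simp)]
    simp [legBasis_apply, smul_eq_C_mul, ha]
  have := h n a (e ▸ hyp_of_splits hp)
  convert this using 1
  conv_lhs => rw [e]
  rw [map_sum]
  refine Finset.sum_congr rfl fun k _ => ?_
  rw [legT_C_mul, legT_legendre, C_mul]; ring

lemma legT_deg (γ : ℕ → ℝ) (n : ℕ) : ∀ p : ℝ[X], p.natDegree ≤ n →
    (legT γ p).natDegree ≤ n ∧ (legT γ p).coeff n = γ n * p.coeff n := by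
  induction n with
  | zero =>
    intro p hp
    obtain ⟨c, rfl⟩ := natDegree_eq_zero.1 (Nat.le_zero.1 hp)
    have : (C c : ℝ[X]) = C c * legendre 0 := by simp [legendre_zero]
    rw [this, legT_C_mul, legT_legendre, legendre_zero, mul_one, mul_one, ← C_mul]
    exact ⟨natDegree_C _ |>.le, by rw [coeff_C_zero, coeff_C_zero, mul_comm]⟩
  | succ n ih =>
    intro p hp
    have hl := (legendre_deg_lead (n+1)).2
    set c := p.coeff (n+1) / (legendre (n+1)).coeff (n+1) with hc
    obtain ⟨q, hq⟩ : ∃ q, q = p - C c * legendre (n+1) := ⟨_, rfl⟩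
    have hqd : q.natDegree ≤ n := by
      have h1 : q.natDegree ≤ n + 1 := by
        rw [hq]
        exact (natDegree_sub_le _ _).trans (max_le hp ((natDegree_C_mul_le _ _).trans
          (legendre_natDegree _).le))
      rw [natDegree_le_iff_coeff_eq_zero] at h1 ⊢
      intro N hN
      rcases Nat.lt_or_ge (n+1) N with h | h
      · exact h1 N h
      · obtain rfl : N = n + 1 := by omega
        rw [hq, coeff_sub, coeff_C_mul, hc]; field_simp; ring
    have hp' : p = C c * legendre (n+1) + q := by rw [hq]; ring
    obtain ⟨i1, i2⟩ := ih q hqd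
    have hT : legT γ p = C c * (C (γ (n+1)) * legendre (n+1)) + legT γ q := by
      conv_lhs => rw [hp', map_add, legT_C_mul, legT_legendre]
    rw [hT]
    constructor
    · refine (natDegree_add_le _ _).trans (max_le ?_ (by omega))
      exact (natDegree_C_mul_le _ _).trans ((natDegree_C_mul_le _ _).trans
          (legendre_natDegree _).le)
    · rw [coeff_add, coeff_eq_zero_of_natDegree_lt (p := legT γ q) (by omega), coeff_C_mul,
        coeff_C_mul, hc]; field_simp; ring

lemma hyp_bound {q : ℝ[X]} (hq : Hyperbolic q) {n : ℕ} (hn : q.natDegree = n) (z : ℂ) :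
    |q.coeff n| * |z.im| ^ n ≤ ‖(q.map (algebraMap ℝ ℂ)).eval z‖ := by
  set Q := q.map (algebraMap ℝ ℂ) with hQ
  have hs : Q.Splits := IsAlgClosed.splits Q
  have hd : Q.natDegree = n := by rw [hQ, natDegree_map, hn]
  have hc : Q.roots.card = n := by rw [splits_iff_card_roots.1 hs, hd]
  have hl : ‖Q.leadingCoeff‖ = |q.coeff n| := by
    rw [hQ, leadingCoeff_map, leadingCoeff, hn]; simp
  have key : ∀ s : Multiset ℂ, (∀ w ∈ s, w.im = 0) →
      |z.im| ^ s.card ≤ ‖(s.map (fun a => z - a)).prod‖ := by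
    intro s
    induction s using Multiset.induction with
    | empty => simp
    | cons a s ih =>
      intro h
      rw [Multiset.map_cons, Multiset.prod_cons, norm_mul, Multiset.card_cons, pow_succ']
      have h1 := ih (fun w hw => h w (Multiset.mem_cons_of_mem hw))
      have h2 : |z.im| ≤ ‖z - a‖ := by
        have := Complex.abs_im_le_norm (z - a)
        rwa [Complex.sub_im, h a (Multiset.mem_cons_self a s), sub_zero] at this
      gcongr
  rw [hs.eval_eq_prod_roots, norm_mul, hl]
  have := key Q.roots hq
  rw [hc] at this
  gcongr

/-- Scaled evaluation of a polynomial of degree at most `j` isolates the degree-`j` term. -/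
lemma tendsto_scaled (q : ℂ[X]) (j : ℕ) (hq : q.natDegree ≤ j) (z : ℂ) :
    Filter.Tendsto (fun t : ℝ => (t:ℂ) ^ j * q.eval (z / t))
      (nhdsWithin 0 {0}ᶜ) (nhds (q.coeff j * z ^ j)) := by
  have h1 : Filter.Tendsto (fun t : ℝ => ∑ i ∈ Finset.range (j+1),
      q.coeff i * z ^ i * (t:ℂ) ^ (j - i)) (nhdsWithin 0 {0}ᶜ)
      (nhds (∑ i ∈ Finset.range (j+1), q.coeff i * z ^ i * ((0:ℝ):ℂ) ^ (j - i))) := by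
    refine Filter.Tendsto.mono_left (Continuous.tendsto ?_ 0) nhdsWithin_le_nhds
    fun_prop
  have h2 : ∑ i ∈ Finset.range (j+1), q.coeff i * z ^ i * ((0:ℝ):ℂ) ^ (j - i)
      = q.coeff j * z ^ j := by
    rw [Finset.sum_range_succ, Finset.sum_eq_zero]
    · simp
    · intro i hi
      have : j - i ≠ 0 := by have := Finset.mem_range.1 hi; omega
      simp [this]
  rw [h2] at h1
  refine h1.congr' ?_
  filter_upwards [self_mem_nhdsWithin] with t ht
  have ht' : (t:ℂ) ≠ 0 := by exact_mod_cast ht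
  rw [eval_eq_sum_range' (Nat.lt_succ_of_le hq), Finset.mul_sum]
  refine Finset.sum_congr rfl fun i hi => ?_
  have : j = (j - i) + i := by have := Finset.mem_range.1 hi; omega
  conv_rhs => rw [this, pow_add]
  rw [div_pow]; field_simp

/-- A Legendre multiplier sequence acts like a classical multiplier sequence. -/
lemma classical_bound {γ : ℕ → ℝ} (h : IsLegendreMS γ) {p : ℝ[X]} (hp : p.Splits) {n : ℕ}
    (hn : p.natDegree = n) (z : ℂ) :
    |γ n * p.coeff n| * |z.im| ^ n ≤
      ‖∑ j ∈ Finset.range (n+1), (p.coeff j : ℂ) * ((γ j : ℂ) * z ^ j)‖ := by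
  by_cases hg : γ n = 0
  · rw [hg]; simp
  have hp0 : p.coeff n ≠ 0 ∨ p = 0 := by
    by_cases h0 : p = 0
    · exact Or.inr h0
    · left; rw [← hn]; exact leadingCoeff_ne_zero.2 h0
  rcases hp0 with hp0 | hp0
  swap
  · rw [hp0]; simp
  let Tz : ℝ → ℂ := fun t => ∑ j ∈ Finset.range (n+1), (p.coeff j : ℂ) *
    ((t:ℂ) ^ j * ((legT γ (X ^ j)).map (algebraMap ℝ ℂ)).eval (z / t))
  have ht : Filter.Tendsto Tz (nhdsWithin 0 {0}ᶜ)
      (nhds (∑ j ∈ Finset.range (n+1), (p.coeff j : ℂ) * ((γ j : ℂ) * z ^ j))) := by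
    refine tendsto_finsetSum _ fun j _ => Filter.Tendsto.const_mul _ ?_
    obtain ⟨d1, d2⟩ := legT_deg γ j (X ^ j) (natDegree_X_pow j).le
    have := tendsto_scaled ((legT γ (X ^ j)).map (algebraMap ℝ ℂ)) j
      (by rw [natDegree_map]; exact d1) z
    rw [coeff_map, d2, coeff_X_pow_self, mul_one] at this
    exact this
  refine ge_of_tendsto ht.norm ?_
  filter_upwards [self_mem_nhdsWithin] with t ht0
  have ht0' : t ≠ 0 := ht0
  set q := p.comp (C t * X) with hq
  have hqs : q.Splits := hp.comp_of_natDegree_le_one (by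
    exact (natDegree_C_mul_le _ _).trans natDegree_X_le)
  have hqc : ∀ j, q.coeff j = p.coeff j * t ^ j := fun j => comp_C_mul_X_coeff
  have hqd : q.natDegree ≤ n := by
    rw [hq, natDegree_comp, natDegree_C_mul_X _ ht0', hn, mul_one]
  have hqe : q = ∑ j ∈ Finset.range (n+1), C (p.coeff j * t ^ j) * X ^ j := by
    rw [as_sum_range_C_mul_X_pow' (p := q) (Nat.lt_succ_of_le hqd)]
    simp only [hqc]
  obtain ⟨d1, d2⟩ := legT_deg γ n q hqd
  have hne : (legT γ q).coeff n ≠ 0 := by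
    rw [d2, hqc]; exact mul_ne_zero hg (mul_ne_zero hp0 (pow_ne_zero _ ht0'))
  have hb := hyp_bound (legT_hyp h hqs) (le_antisymm d1 (le_natDegree_of_ne_zero hne)) (z / t)
  have hTz : ((legT γ q).map (algebraMap ℝ ℂ)).eval (z / t) = Tz t := by
    rw [hqe, map_sum, Polynomial.map_sum, eval_finsetSum]
    refine Finset.sum_congr rfl fun j _ => ?_
    rw [legT_C_mul, Polynomial.map_mul, eval_mul, map_C, eval_C]
    simp [mul_assoc]
  rw [hTz, d2, hqc, Complex.div_ofReal_im, abs_div, ← mul_assoc, abs_mul, abs_pow, div_pow,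
    mul_assoc, mul_div_cancel₀ _ (pow_ne_zero _ (abs_ne_zero.2 ht0'))] at hb
  exact hb

lemma log_concave {γ : ℕ → ℝ} (h : IsLegendreMS γ) (hpos : ∀ k, 0 ≤ γ k) (k : ℕ) :
    γ k * γ (k+2) ≤ γ (k+1) ^ 2 := by
  by_contra hlt
  push Not at hlt
  have hg : 0 < γ (k+2) := by
    rcases (hpos (k+2)).lt_or_eq with h | h
    · exact h
    · rw [← h] at hlt; nlinarith [sq_nonneg (γ (k+1))]
  set d := γ k * γ (k+2) - γ (k+1)^2 with hd
  have hdp : 0 < d := by linarith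
  set p : ℝ[X] := X ^ k * (X + C 1) ^ 2 with hp
  have hps : p.Splits := (Splits.X_pow k).mul ((Splits.X_add_C 1).pow 2)
  have hpe : p = X ^ (k+2) + C 2 * X ^ (k+1) + X ^ k := by
    rw [hp]; simp only [map_one, map_ofNat]; ring
  have c2 : p.coeff (k+2) = 1 := by rw [hpe]; simp [coeff_X_pow]
  have c1 : p.coeff (k+1) = 2 := by rw [hpe]; simp [coeff_X_pow]
  have c0 : p.coeff k = 1 := by rw [hpe]; simp [coeff_X_pow]
  have hnd : p.natDegree = k + 2 := by
    rw [hp]; 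
    rw [((monic_X_pow k).natDegree_mul ((monic_X_add_C 1).pow 2)), natDegree_pow, natDegree_pow,
      natDegree_X, natDegree_X_add_C]
    ring
  have cl : ∀ j < k, p.coeff j = 0 := by
    intro j hj
    rw [hp, mul_comm, coeff_mul_X_pow', if_neg (by omega)]
  set z : ℂ := ⟨-γ (k+1) / γ (k+2), Real.sqrt d / γ (k+2)⟩ with hz
  have hb := classical_bound h hps hnd z
  rw [Finset.sum_range_succ, Finset.sum_range_succ, Finset.sum_range_succ,
    Finset.sum_eq_zero (fun j hj => by rw [cl j (Finset.mem_range.1 hj)]; simp), c0, c1, c2] at hb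
  have hz0 : (γ (k+2) : ℂ) * z ^ 2 + 2 * γ (k+1) * z + γ k = 0 := by
    have hs := Real.sq_sqrt hdp.le
    apply Complex.ext
    · simp [hz, pow_two]; field_simp; nlinarith
    · simp [hz, pow_two]; field_simp; ring
  have : (0 + ((1:ℝ):ℂ) * (γ k * z ^ k) + ((2:ℝ):ℂ) * (γ (k+1) * z ^ (k+1))
      + ((1:ℝ):ℂ) * (γ (k+2) * z ^ (k+2))) = 0 := by
    push_cast
    linear_combination z ^ k * hz0
  rw [this, norm_zero] at hb
  have : 0 < |γ (k+2) * 1| * |z.im| ^ (k+2) := by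
    have : 0 < z.im := div_pos (Real.sqrt_pos.2 hdp) hg
    positivity
  linarith

/-- no internal zeros -/
lemma no_gap_s8 {γ : ℕ → ℝ} (h : IsLegendreMS γ) (hpos : ∀ k, 0 ≤ γ k) (i m : ℕ) (hm : 2 ≤ m)
    (hi : γ i ≠ 0) (hj : γ (i + m) ≠ 0) (hz : ∀ k, i < k → k < i + m → γ k = 0) : False := by
  have hi' : 0 < γ i := lt_of_le_of_ne (hpos i) hi.symm
  have hj' : 0 < γ (i+m) := lt_of_le_of_ne (hpos _) hj.symm
  set p : ℝ[X] := (X + C 1) ^ m * X ^ i with hp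
  have hps : p.Splits := ((Splits.X_add_C 1).pow m).mul (Splits.X_pow i)
  have hnd : p.natDegree = i + m := by
    rw [hp, ((monic_X_add_C 1).pow m).natDegree_mul (monic_X_pow i), natDegree_pow, natDegree_pow,
      natDegree_X, natDegree_X_add_C]
    ring
  have hmon : p.Monic := ((monic_X_add_C 1).pow m).mul (monic_X_pow i)
  have ctop : p.coeff (i + m) = 1 := by rw [← hnd]; exact hmon
  have cbot : p.coeff i = 1 := by
    have := coeff_mul_X_pow ((X + C (1:ℝ)) ^ m) i 0
    rw [zero_add] at this
    rw [hp, this, coeff_zero_eq_eval_zero]; simp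
  have cl : ∀ j < i, p.coeff j = 0 := by
    intro j hj
    rw [hp, coeff_mul_X_pow', if_neg (by omega)]
  set r : ℝ := (γ i / γ (i+m)) ^ (1 / (m:ℝ)) with hr
  have hrp : 0 < r := Real.rpow_pos_of_pos (div_pos hi' hj') _
  have hm0 : (m:ℝ) ≠ 0 := by positivity
  have hrm : r ^ m = γ i / γ (i+m) := by
    rw [hr, ← Real.rpow_natCast, ← Real.rpow_mul (div_pos hi' hj').le]
    rw [one_div_mul_cancel hm0, Real.rpow_one]
  set z : ℂ := r * Complex.exp (((Real.pi / m : ℝ) : ℂ) * Complex.I) with hzd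
  have hzm : z ^ m = -(r:ℂ)^m := by
    rw [hzd, mul_pow, ← Complex.exp_nat_mul]
    have : (m:ℂ) * (((Real.pi / m : ℝ) : ℂ) * Complex.I) = Real.pi * Complex.I := by
      have : (m:ℂ) ≠ 0 := by exact_mod_cast hm0
      push_cast; field_simp
    rw [this, Complex.exp_pi_mul_I]; ring
  have hzim : 0 < z.im := by
    rw [hzd, Complex.im_ofReal_mul, Complex.exp_ofReal_mul_I_im]
    refine mul_pos hrp (Real.sin_pos_of_pos_of_lt_pi (by positivity) ?_)
    have : (2:ℝ) ≤ m := by exact_mod_cast hm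
    exact div_lt_self Real.pi_pos (by linarith)
  have hb := classical_bound h hps hnd z
  have hsum : ∑ j ∈ Finset.range (i+m+1), (p.coeff j : ℂ) * ((γ j : ℂ) * z ^ j) = 0 := by
    have hsub : ({i, i+m} : Finset ℕ) ⊆ Finset.range (i+m+1) := by
      intro x hx; simp at hx ⊢; omega
    rw [← Finset.sum_subset hsub, Finset.sum_pair (by omega), cbot, ctop, pow_add, hzm]
    · have : (γ (i+m) : ℂ) * (r:ℂ)^m = γ i := by
        rw [← Complex.ofReal_pow, ← Complex.ofReal_mul, hrm]; congr 1; field_simp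
      push_cast
      linear_combination -z ^ i * this
    · intro x hx hx2
      simp at hx hx2
      rcases Nat.lt_or_ge x i with h1 | h1
      · rw [cl x h1]; simp
      · rw [hz x (by omega) (by omega)]; simp
  rw [hsum, norm_zero, ctop] at hb
  have : 0 < |γ (i+m) * 1| * |z.im| ^ (i+m) := by positivity
  linarith

/-- The Legendre polynomials on the imaginary axis, normalised. -/
noncomputable def rl : ℕ → ℝ → ℝ
  | 0, _ => 1
  | 1, y => y
  | n+2, y => (2 * (n:ℝ) + 3) / (n+2) * (y * rl (n+1) y) + ((n:ℝ)+1)/(n+2) * rl n y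

lemma rl_eval (n : ℕ) (y : ℝ) :
    ((legendre n).map (algebraMap ℝ ℂ)).eval (y * Complex.I) = Complex.I ^ n * rl n y := by
  induction n using Nat.twoStepInduction with
  | zero => simp [legendre_zero, rl]
  | one => simp [legendre_one, rl, mul_comm]
  | more n ih1 ih2 =>
    rw [legendre_rec', rl, Polynomial.map_sub, Polynomial.map_mul, Polynomial.map_mul,
      Polynomial.map_mul, eval_sub, eval_mul, eval_mul, eval_mul, ih1, ih2]
    simp only [map_X, eval_X, map_C, eval_C, Complex.coe_algebraMap]
    have h2 := Complex.I_sq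
    push_cast
    rw [pow_succ, pow_add]
    linear_combination (-(((n:ℂ)+1)/(n+2)) * Complex.I ^ n * rl n y) * h2

lemma rl_cont (n : ℕ) : Continuous (rl n) := by
  induction n using Nat.twoStepInduction with
  | zero => simp only [rl]; fun_prop
  | one => simp only [rl]; fun_prop
  | more n ih1 ih2 => simp only [rl]; fun_prop

lemma rl_pos (n : ℕ) {y : ℝ} (hy : 0 < y) : 0 < rl n y := by
  induction n using Nat.twoStepInduction with
  | zero => simp [rl]
  | one => simpa [rl]
  | more n ih1 ih2 => rw [rl]; positivity

lemma rl_even (k : ℕ) : 0 < rl (2 * k) 0 := by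
  induction k with
  | zero => simp [rl]
  | succ k ih => rw [show 2 * (k+1) = 2 * k + 2 by ring, rl]; simp only [zero_mul, mul_zero, zero_add]; positivity

lemma rl_step (n : ℕ) {y : ℝ} (hy : 0 < y) : y * rl n y ≤ rl (n+1) y := by
  rcases n with _ | n
  · simp [rl]
  · rw [rl]
    have h1 := rl_pos n hy
    have h2 := rl_pos (n+1) hy
    have h3 : 1 ≤ (2 * (n:ℝ) + 3) / (n+2) := by
      rw [one_le_div (by positivity)]
      have : (0:ℝ) ≤ n := by positivity
      linarith
    have h4 : 0 ≤ ((n:ℝ)+1)/(n+2) * rl n y := by positivity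
    have h5 : 0 < y * rl (n+1) y := by positivity
    nlinarith

lemma not_hyp {α β y₀ : ℝ} (hα : 0 < α) (hβ : 0 < β) (hy : 0 ≤ y₀) (n : ℕ)
    (hlt : α * rl (n+2) y₀ < β * rl n y₀) :
    ¬ Hyperbolic (C α * legendre (n+2) + C β * legendre n) := by
  intro hh
  set g : ℝ → ℝ := fun y => α * rl (n+2) y - β * rl n y with hg
  have hgc : Continuous g :=
    ((rl_cont (n+2)).const_mul α).sub ((rl_cont n).const_mul β)
  set Y := y₀ + 1 + β / α with hY
  have hba : 0 < β / α := div_pos hβ hα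
  have hY1 : 1 < Y := by linarith
  have hYp : 0 < Y := by linarith
  have hgY : 0 < g Y := by
    have h1 := rl_step n hYp
    have h2 := rl_step (n+1) hYp
    have h3 := rl_pos n hYp
    have h4 : Y * (Y * rl n Y) ≤ rl (n+2) Y := le_trans (by gcongr) h2
    have h5 : β < α * Y := by
      have : α * (β / α) = β := by field_simp
      rw [hY]; nlinarith
    have h6 : β < α * (Y * Y) := by nlinarith
    have : α * (Y * (Y * rl n Y)) ≤ α * rl (n+2) Y := by gcongr
    simp only [hg]
    nlinarith
  have hg0 : g y₀ < 0 := by simp only [hg]; linarith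
  obtain ⟨y, hy1, hy2⟩ := intermediate_value_Icc (by linarith : y₀ ≤ Y) hgc.continuousOn
    (show (0:ℝ) ∈ Set.Icc (g y₀) (g Y) from ⟨hg0.le, hgY.le⟩)
  have hyp : 0 < y := by
    rcases hy1.1.lt_or_eq with h | h
    · linarith
    · rw [h] at hg0; linarith
  have hne : C α * legendre (n+2) + C β * legendre n ≠ 0 := by
    intro h0
    have := congrArg (fun p => p.coeff (n+2)) h0
    simp only [coeff_add, coeff_C_mul, coeff_zero] at this
    rw [coeff_eq_zero_of_natDegree_lt (p := legendre n) (by rw [legendre_natDegree]; omega)] at this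
    have := mul_pos hα (legendre_deg_lead (n+2)).2
    linarith
  have hr := hh (y * Complex.I) (by
    rw [mem_roots (by rwa [Ne, Polynomial.map_eq_zero]), IsRoot, Polynomial.map_add,
      Polynomial.map_mul, Polynomial.map_mul, eval_add, eval_mul, eval_mul, rl_eval, rl_eval]
    simp only [map_C, eval_C, Complex.coe_algebraMap]
    have h3 : (α:ℂ) * rl (n+2) y - β * rl n y = 0 := by exact_mod_cast hy2
    have h2 := Complex.I_sq
    rw [pow_add, h2]
    linear_combination -Complex.I ^ n * h3)
  simp at hr
  linarith

lemma mul_X_legendre (n : ℕ) : X * legendre (n+1) =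
    C (((n:ℝ)+2)/(2*n+3)) * legendre (n+2) + C (((n:ℝ)+1)/(2*n+3)) * legendre n := by
  have h := legendre_rec n
  have hn2 : 2*(n:ℝ)+3 ≠ 0 := by positivity
  have h2 := congrArg (fun p => C ((2*(n:ℝ)+3)⁻¹) * p) h
  simp only [mul_sub, ← mul_assoc, ← C_mul, inv_mul_cancel₀ hn2] at h2
  rw [map_one, one_mul, ← div_eq_inv_mul, ← div_eq_inv_mul] at h2
  linear_combination -h2

lemma even_step {γ : ℕ → ℝ} (h : IsLegendreMS γ) (k : ℕ) (hp : 0 < γ (2*k+2)) :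
    γ (2*k) ≤ γ (2*k+2) := by
  by_contra hlt
  push Not at hlt
  have hs : (X * legendre (2*k+1)).Splits := Splits.X.mul (legendre_splits _)
  have hT := legT_hyp h hs
  rw [mul_X_legendre, map_add, legT_C_mul, legT_C_mul, legT_legendre, legT_legendre, ← mul_assoc,
    ← mul_assoc, ← C_mul, ← C_mul] at hT
  refine not_hyp (y₀ := 0) ?_ ?_ le_rfl (2*k) ?_ hT
  · positivity
  · exact mul_pos (by positivity) (hp.trans hlt)
  · rw [rl]
    have := rl_even k
    set K : ℝ := ((2 * k : ℕ) : ℝ)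
    have hK : 0 ≤ K := by positivity
    have e : (K+2)/(2*K+3) * γ (2*k+2) * ((2*K+3)/(K+2) * (0 * rl (2*k+1) 0) + (K+1)/(K+2) * rl (2*k) 0)
      = (K+1)/(2*K+3) * rl (2*k) 0 * γ (2*k+2) := by
      field_simp; ring
    rw [e]
    have : 0 < (K+1)/(2*K+3) * rl (2*k) 0 := by positivity
    nlinarith

lemma no_triple {γ : ℕ → ℝ} (h : IsLegendreMS γ) (m : ℕ) (h0 : 0 < γ m) (h2 : 0 < γ (m+2))
    (h4 : γ (m+4) = 0) : False := by
  obtain ⟨A, σ, τ, hσ, hτ, e⟩ : ∃ A σ τ : ℝ, 0 < σ ∧ 0 < τ ∧ X * (X * legendre (m+2)) =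
      C A * legendre (m+4) + C σ * legendre (m+2) + C τ * legendre m := by
    have e1 := mul_X_legendre (m+1)
    have e2 := mul_X_legendre (m+2)
    have e3 := mul_X_legendre m
    set a1 := (((m+1:ℕ):ℝ)+2)/(2*((m+1:ℕ):ℝ)+3) with ha1
    set b1 := (((m+1:ℕ):ℝ)+1)/(2*((m+1:ℕ):ℝ)+3) with hb1
    set a2 := (((m+2:ℕ):ℝ)+2)/(2*((m+2:ℕ):ℝ)+3) with ha2
    set b2 := (((m+2:ℕ):ℝ)+1)/(2*((m+2:ℕ):ℝ)+3) with hb2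
    set a3 := ((m:ℝ)+2)/(2*(m:ℝ)+3) with ha3
    set b3 := ((m:ℝ)+1)/(2*(m:ℝ)+3) with hb3
    refine ⟨a1 * a2, a1 * b2 + b1 * a3, b1 * b3, by positivity, by positivity, ?_⟩
    simp only [C_mul, C_add]
    linear_combination X * e1 + C a1 * e2 + C b1 * e3
  have p1 := rl_pos m one_pos
  have p2 := rl_pos (m+2) one_pos
  set δ := min σ (τ * γ m * rl m 1 / (2 * γ (m+2) * rl (m+2) 1)) with hδ
  have hδ0 : 0 < δ := lt_min hσ (by positivity)
  have hδ1 : δ ≤ σ := min_le_left _ _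
  have hδ2 : δ ≤ τ * γ m * rl m 1 / (2 * γ (m+2) * rl (m+2) 1) := min_le_right _ _
  set s := Real.sqrt (σ - δ) with hs
  have hss : s * s = σ - δ := Real.mul_self_sqrt (by linarith)
  have hsp : ((X - C s) * (X + C s) * legendre (m+2)).Splits :=
    ((Splits.X_sub_C _).mul (Splits.X_add_C _)).mul (legendre_splits _)
  have e' : (X - C s) * (X + C s) * legendre (m+2) =
      C A * legendre (m+4) + C δ * legendre (m+2) + C τ * legendre m := by
    have : C s * C s = C σ - C δ := by rw [← C_mul, hss, C_sub]
    linear_combination e - legendre (m+2) * this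
  have hT := legT_hyp h hsp
  rw [e', map_add, map_add, legT_C_mul, legT_C_mul, legT_C_mul, legT_legendre, legT_legendre,
    legT_legendre, h4, C_0, zero_mul, mul_zero, zero_add, ← mul_assoc,
    ← mul_assoc, ← C_mul, ← C_mul] at hT
  refine not_hyp (y₀ := 1) (by positivity) (by positivity) zero_le_one m ?_ hT
  rw [le_div_iff₀ (by positivity)] at hδ2
  have : 0 < δ * γ (m+2) * rl (m+2) 1 := by positivity
  nlinarith

/-- zeros after a nonzero term propagate -/
lemma zero_prop {γ : ℕ → ℝ} (h : IsLegendreMS γ) (hpos : ∀ k, 0 ≤ γ k) {i n j : ℕ}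
    (hin : i < n) (hnj : n < j) (hi : γ i ≠ 0) (hn : γ n = 0) : γ j = 0 := by
  classical
  by_contra hj
  -- smallest nonzero index above n, largest nonzero index below n
  have hex : ∃ j, n < j ∧ γ j ≠ 0 := ⟨j, hnj, hj⟩
  obtain ⟨hJ1, hJ2⟩ := Nat.find_spec hex
  set J := Nat.find hex
  set P : ℕ → Prop := fun i => γ i ≠ 0
  have hI : P (Nat.findGreatest P n) := Nat.findGreatest_spec hin.le hi
  have hIle : Nat.findGreatest P n ≤ n := Nat.findGreatest_le n
  set I := Nat.findGreatest P n with hIdef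
  have hIn : I ≠ n := fun e => hI (e ▸ hn)
  refine no_gap_s8 h hpos I (J - I) (by omega) hI (by rwa [show I + (J - I) = J by omega]) ?_
  intro k hk1 hk2
  rcases Nat.lt_or_ge n k with h1 | h1
  · by_contra hne
    exact Nat.find_min hex (m := k) (by omega) ⟨h1, hne⟩
  · by_contra hne
    exact Nat.findGreatest_is_greatest (P := P) (n := n) hk1 h1 hne

theorem stmt_8 (γ : ℕ → ℝ) (h : IsLegendreMS γ) (hnt : ¬ IsTrivialSeq γ)
    (hpos : ∀ k, 0 ≤ γ k) : ∀ k, γ k ≤ γ (k + 1) := by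
  classical
  intro k
  by_contra hlt
  push Not at hlt
  have hk : 0 < γ k := (hpos _).trans_lt hlt
  by_cases hall : ∀ j, k < j → γ j ≠ 0
  · have hdec : ∀ i, γ (k + i + 1) < γ (k + i) := by
      intro i
      induction i with
      | zero => exact hlt
      | succ i ih =>
        have hl := log_concave h hpos (k+i)
        have h1 : 0 < γ (k+i+1) := lt_of_le_of_ne (hpos _) (hall _ (by omega)).symm
        have h0 : 0 < γ (k+i) := h1.trans ih
        change γ (k+i+2) < γ (k+i+1)
        by_contra hc
        push Not at hc
        nlinarith
    have hp2 : 0 < γ (2*k+2) := lt_of_le_of_ne (hpos _) (hall _ (by omega)).symm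
    have h1 := even_step h k hp2
    have h2 := hdec k
    have h3 := hdec (k+1)
    rw [show k + k = 2 * k by ring] at h2
    rw [show k + (k + 1) + 1 = 2 * k + 2 by ring, show k + (k + 1) = 2 * k + 1 by ring] at h3
    linarith
  · push Not at hall
    obtain ⟨n, hkn, hn⟩ := hall
    have hz : ∀ j, n ≤ j → γ j = 0 := by
      intro j hj
      rcases hj.lt_or_eq with h1 | h1
      · exact zero_prop h hpos hkn h1 hk.ne' hn
      · rw [← h1, hn]
    set P : ℕ → Prop := fun i => γ i ≠ 0 with hP
    have hM : P (Nat.findGreatest P n) := Nat.findGreatest_spec hkn.le hk.ne'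
    have hMz : ∀ j, Nat.findGreatest P n < j → γ j = 0 := by
      intro j hj
      rcases Nat.lt_or_ge n j with h1 | h1
      · exact hz j h1.le
      · by_contra hne
        exact Nat.findGreatest_is_greatest (P := P) (n := n) hj h1 hne
    set M := Nat.findGreatest P n
    have hi : ∃ i, i + 2 ≤ M ∧ γ i ≠ 0 := by
      by_contra hno
      push Not at hno
      refine hnt (Or.inr ⟨M - 1, fun j h1 h2 => ?_⟩)
      rcases Nat.lt_or_ge M j with h3 | h3
      · exact hMz j h3
      · exact hno j (by omega)
    obtain ⟨i, hiM, hi⟩ := hi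
    obtain ⟨m, hm⟩ : ∃ m, M = m + 2 := ⟨M - 2, by omega⟩
    rw [hm] at hM hMz hiM
    have hm0 : γ m ≠ 0 := by
      intro h0
      rcases Nat.lt_or_ge i m with h1 | h1
      · exact hM (zero_prop h hpos h1 (by omega) hi h0)
      · obtain rfl : i = m := by omega
        exact hi h0
    exact no_triple h m (lt_of_le_of_ne (hpos _) hm0.symm) (lt_of_le_of_ne (hpos _) (Ne.symm hM))
      (hMz _ (by omega))
end

section
/- For real numbers α and β, the sequence (k² + αk + β)_{k=0}^∞ is a classical multiplier sequence if and only if α ≥ −1 and 0 ≤ β ≤ (α + 1)²/4. -/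
open Polynomial

lemma hyp_iff (p : ℝ[X]) : Hyperbolic p ↔ (p = 0 ∨ ∀ z : ℂ, aeval z p = 0 → z.im = 0) := by
  unfold Hyperbolic
  by_cases hp : p = 0
  · simp [hp]
  · have : p.map (algebraMap ℝ ℂ) ≠ 0 := by
      rwa [Ne, Polynomial.map_eq_zero]
    simp only [hp, false_or, mem_roots this, IsRoot.def, eval_map_algebraMap]

/-- The differential form of the diagonal operator. -/
noncomputable def TT (α β : ℝ) (p : ℝ[X]) : ℝ[X] :=
  X ^ 2 * derivative (derivative p) + C (α + 1) * (X * derivative p) + C β * p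

lemma TT_sum (α β : ℝ) (n : ℕ) (a : ℕ → ℝ) :
    ∑ k ∈ Finset.range n, C (((k : ℝ) ^ 2 + α * k + β) * a k) * X ^ k
      = TT α β (∑ k ∈ Finset.range n, C (a k) * X ^ k) := by
  simp only [TT, derivative_sum, Finset.mul_sum, ← Finset.sum_add_distrib]
  refine Finset.sum_congr rfl fun k _ => ?_
  rcases k with _ | _ | k
  · simp
  · simp; ring
  · simp [derivative_X_pow]
    ring

lemma TT_of_mult {α β : ℝ}
    (h : IsMultiplierSeqFor (fun k => X ^ k) (fun k => (k : ℝ) ^ 2 + α * k + β))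
    (p : ℝ[X]) (hp : Hyperbolic p) : Hyperbolic (TT α β p) := by
  have := h (p.natDegree + 1) p.coeff
  simp only [TT_sum, ← as_sum_range_C_mul_X_pow] at this
  exact this hp

def Stab (q : ℂ[X]) : Prop := ∀ y : ℂ, 0 < y.im → q.eval y ≠ 0

lemma multiset_im_neg (s : Multiset ℂ) (hs : s ≠ 0) (h : ∀ w ∈ s, w.im < 0) : s.sum.im < 0 := by
  induction s using Multiset.induction_on with
  | empty => simp at hs
  | cons a s ih =>
    have h1 := h a (by simp)
    by_cases hs' : s = 0
    · simpa [hs'] using h1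
    · have := ih hs' fun w hw => h w (by simp [hw])
      simp; linarith

lemma logderiv_im (q : ℂ[X]) (hq : Stab q) (hd : q.natDegree ≠ 0) (y : ℂ) (hy : 0 < y.im) :
    (q.derivative.eval y / q.eval y).im < 0 := by
  rw [(IsAlgClosed.splits q).eval_derivative_div_eval_of_ne_zero (hq y hy)]
  apply multiset_im_neg
  · intro h
    rw [Multiset.map_eq_zero] at h
    have := (IsAlgClosed.splits q).natDegree_eq_card_roots
    simp [h] at this
    exact hd this
  · intro w hw
    obtain ⟨r, hr, rfl⟩ := Multiset.mem_map.1 hw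
    have hr' : q.eval r = 0 := (mem_roots'.1 hr).2
    have : r.im ≤ 0 := by
      by_contra! h
      exact hq r h hr'
    have h2 : 0 < (y - r).im := by simp; linarith
    have h3 : 0 < Complex.normSq (y - r) := by
      rw [Complex.normSq_pos]; intro h; simp [h] at h2
    rw [one_div, Complex.inv_im]
    exact div_neg_of_neg_of_pos (by linarith) h3

lemma stab_add (q : ℂ[X]) (hq : Stab q) (u : ℝ) (hu : 0 < u) (z : ℂ) (hz : 0 < z.im) :
    Stab (C (u : ℂ) * q + C z * derivative q) := by
  intro y hy h
  by_cases hd : q.natDegree = 0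
  · rw [eq_C_of_natDegree_eq_zero hd] at h
    simp at h
    rcases h with h | h
    · linarith
    · apply hq y hy
      rw [eq_C_of_natDegree_eq_zero hd]; simp [h]
  · have h1 := logderiv_im q hq hd y hy
    have h0 := hq y hy
    have hz0 : z ≠ 0 := by rintro rfl; simp at hz
    simp at h
    have : q.derivative.eval y / q.eval y = - (u * z⁻¹) := by
      field_simp
      linear_combination h
    rw [this] at h1
    have h3 : 0 < Complex.normSq z := Complex.normSq_pos.2 hz0
    simp [Complex.inv_im] at h1
    have : u * (-z.im / Complex.normSq z) < 0 :=
      mul_neg_of_pos_of_neg hu (div_neg_of_neg_of_pos (by linarith) h3)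
    linarith

lemma stab_deriv (q : ℂ[X]) (hq : Stab q) : derivative q = 0 ∨ Stab (derivative q) := by
  by_cases hd : q.natDegree = 0
  · left; rw [eq_C_of_natDegree_eq_zero hd]; simp
  · right
    intro y hy h
    have h1 := logderiv_im q hq hd y hy
    simp [h] at h1

lemma key (P : ℂ[X]) (hP : Stab P) (u v : ℝ) (hu : 0 ≤ u) (hv : 0 ≤ v) :
    (X ^ 2 * derivative (derivative P) + C ((u + v : ℝ) : ℂ) * (X * derivative P)
      + C ((u * v : ℝ) : ℂ) * P = 0) ∨
    Stab (X ^ 2 * derivative (derivative P) + C ((u + v : ℝ) : ℂ) * (X * derivative P)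
      + C ((u * v : ℝ) : ℂ) * P) := by
  wlog huv : u ≤ v generalizing u v
  · have := this v u hv hu (by linarith)
    rwa [add_comm u v, mul_comm u v]
  rcases hu.eq_or_lt with rfl | hu
  · rcases stab_deriv P hP with h | h
    · left; simp [h]
    rcases hv.eq_or_lt with rfl | hv
    · rcases stab_deriv _ h with h | h
      · left; simp [h]
      · right; intro z hz h'
        have hz0 : z ≠ 0 := by rintro rfl; simp at hz
        simp [hz0] at h'
        exact h z hz h'
    · right; intro z hz h'
      have hz0 : z ≠ 0 := by rintro rfl; simp at hz
      apply stab_add _ h v hv z hz z hz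
      simp at h' ⊢
      apply mul_left_cancel₀ hz0
      linear_combination h'
  · right; intro z hz h'
    apply stab_add _ (stab_add _ hP u hu z hz) v (by linarith) z hz z hz
    simp at h' ⊢
    linear_combination h'

lemma aeval_conj' (p : ℝ[X]) (z : ℂ) (h : aeval z p = 0) :
    aeval ((starRingEnd ℂ) z) p = 0 := by
  rw [Polynomial.aeval_conj, h, map_zero]

lemma suff (α β : ℝ) (h1 : -1 ≤ α) (h2 : 0 ≤ β) (h3 : β ≤ (α + 1) ^ 2 / 4) (p : ℝ[X])
    (hp : Hyperbolic p) : Hyperbolic (TT α β p) := by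
  rw [hyp_iff] at hp ⊢
  rcases hp with rfl | hp
  · left; simp [TT]
  set s := √((α + 1) ^ 2 - 4 * β) with hs
  have hs2 : s ^ 2 = (α + 1) ^ 2 - 4 * β := Real.sq_sqrt (by linarith)
  have hs0 : 0 ≤ s := Real.sqrt_nonneg _
  have hsle : s ≤ α + 1 := abs_le_of_sq_le_sq' (by linarith) (by linarith) |>.2
  have hP : Stab (p.map (algebraMap ℝ ℂ)) := by
    intro y hy h
    rw [eval_map_algebraMap] at h
    have := hp y h
    linarith
  have := key _ hP ((α + 1 - s) / 2) ((α + 1 + s) / 2) (by linarith) (by linarith)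
  have e1 : (α + 1 - s) / 2 + (α + 1 + s) / 2 = α + 1 := by ring
  have e2 : (α + 1 - s) / 2 * ((α + 1 + s) / 2) = β := by linear_combination -hs2 / 4
  rw [e1, e2] at this
  have e3 : X ^ 2 * derivative (derivative (p.map (algebraMap ℝ ℂ)))
      + C ((α + 1 : ℝ) : ℂ) * (X * derivative (p.map (algebraMap ℝ ℂ)))
      + C (β : ℂ) * p.map (algebraMap ℝ ℂ) = (TT α β p).map (algebraMap ℝ ℂ) := by
    simp [TT, derivative_map]
  rw [e3] at this
  rcases this with h | h
  · left; rwa [Polynomial.map_eq_zero] at h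
  · right
    intro z hz
    have hz' := aeval_conj' _ _ hz
    rw [← eval_map_algebraMap] at hz hz'
    rcases lt_trichotomy z.im 0 with h0 | h0 | h0
    · exact absurd hz' (h _ (by simpa using h0))
    · exact h0
    · exact absurd hz (h _ h0)

lemma nec1 {α β : ℝ} (h : ∀ p, Hyperbolic p → Hyperbolic (TT α β p)) (m : ℕ)
    (hm : (m : ℝ) ^ 2 + α * m + β < 0) (hm2 : 0 < ((m + 2 : ℕ) : ℝ) ^ 2 + α * (m + 2 : ℕ) + β) :
    False := by
  have hp : Hyperbolic (X ^ m * (X ^ 2 - 1) : ℝ[X]) := by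
    rw [hyp_iff]; right; intro z hz
    simp at hz
    rcases hz with hz | hz
    · simp [hz.1]
    · have : (z - 1) * (z + 1) = 0 := by linear_combination hz
      rcases mul_eq_zero.1 this with h | h
      · simp [sub_eq_zero.1 h]
      · simp [eq_neg_of_add_eq_zero_left h]
  have h1 := h _ hp
  set A : ℝ := ((m + 2 : ℕ) : ℝ) ^ 2 + α * (m + 2 : ℕ) + β with hA
  set B : ℝ := (m : ℝ) ^ 2 + α * m + β with hB
  have e : TT α β (X ^ m * (X ^ 2 - 1)) = X ^ m * (C A * X ^ 2 - C B) := by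
    have c2 : (C 2 : ℝ[X]) = 2 := rfl
    have c3 : (C 3 : ℝ[X]) = 3 := rfl
    rw [hA, hB]
    rcases m with _ | _ | m
    · simp [TT, c2, c3]; ring
    · simp [TT, c2, c3]; ring
    · simp [TT, c2, c3]; ring
  rw [e, hyp_iff] at h1
  rcases h1 with h1 | h1
  · have := congrArg (eval 1) h1
    simp at this; linarith
  · have hAB : 0 < -B / A := div_pos (by linarith) hm2
    have hsq : (√(-B / A)) ^ 2 = -B / A := Real.sq_sqrt hAB.le
    have := h1 (Complex.I * (√(-B / A) : ℝ)) (by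
      simp only [map_mul, map_sub, map_pow, aeval_X, aeval_C]
      apply mul_eq_zero_of_right
      rw [mul_pow, Complex.I_sq, ← Complex.ofReal_pow, hsq]
      have : (A : ℂ) ≠ 0 := by exact_mod_cast hm2.ne'
      simp
      field_simp
      ring)
    simp at this
    have h4 := Real.sqrt_pos.2 hAB
    linarith

lemma nec2 {α β : ℝ} (h : ∀ p, Hyperbolic p → Hyperbolic (TT α β p)) (m : ℕ) :
    0 ≤ (m : ℝ) ^ 2 + α * m + β := by
  by_contra! hm
  -- eventually nonnegative
  have hex : ∃ j : ℕ, 0 ≤ ((m + j : ℕ) : ℝ) ^ 2 + α * (m + j : ℕ) + β := by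
    obtain ⟨j, hj⟩ := exists_nat_ge (|α| + |β| + 1)
    refine ⟨j, ?_⟩
    have h1 := neg_abs_le α
    have h2 := neg_abs_le β
    have h3 : (j : ℝ) ≤ (m + j : ℕ) := by push_cast; linarith [(m.cast_nonneg : (0 : ℝ) ≤ m)]
    have := abs_nonneg α
    have := abs_nonneg β
    generalize ((m + j : ℕ) : ℝ) = t at *
    nlinarith
  classical
  obtain ⟨hj, hmin⟩ := (⟨Nat.find_spec hex, fun i => Nat.find_min hex (m := i)⟩ :
    _ ∧ ∀ i, i < Nat.find hex → _)
  generalize Nat.find hex = j at hj hmin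
  rcases j with _ | j
  · simp at hj; linarith
  · have h1 := hmin j (by omega)
    push Not at h1
    refine nec1 h (m + j) h1 ?_
    push_cast at *
    nlinarith

lemma nec3 {α β : ℝ} (h : ∀ p, Hyperbolic p → Hyperbolic (TT α β p)) :
    β ≤ (α + 1) ^ 2 / 4 := by
  by_contra! hb
  obtain ⟨m, hm⟩ := exists_nat_gt (4 * β / (4 * β - (α + 1) ^ 2) + |α| + |β|)
  set n : ℝ := (m : ℝ) + 2 with hn
  have hpos : 0 < 4 * β - (α + 1) ^ 2 := by linarith
  have hb0 : 0 < β := by nlinarith [sq_nonneg (α + 1)]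
  have hq : 0 ≤ 4 * β / (4 * β - (α + 1) ^ 2) := by positivity
  have hα := neg_abs_le α
  have := abs_nonneg α
  have := abs_nonneg β
  have hn1 : 4 * β < n * (4 * β - (α + 1) ^ 2) := by
    rw [← div_lt_iff₀ hpos]; linarith
  have hn0 : 0 < n := by positivity
  set A : ℝ := n ^ 2 + α * n + β with hA
  set B : ℝ := (α + 1) * n + 2 * β with hB
  have hA0 : 0 < A := by
    have : 0 < n * (n + α) := mul_pos hn0 (by linarith)
    nlinarith
  have hD : 0 < 4 * A * β - B ^ 2 := by
    have : 4 * A * β - B ^ 2 = n * (n * (4 * β - (α + 1) ^ 2) - 4 * β) := by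
      rw [hA, hB]; ring
    rw [this]; exact mul_pos hn0 (by linarith)
  have hp : Hyperbolic ((X + 1) ^ (m + 2) : ℝ[X]) := by
    rw [hyp_iff]; right; intro z hz
    simp at hz
    simp [eq_neg_of_add_eq_zero_left hz]
  have h1 := h _ hp
  have e : TT α β ((X + 1) ^ (m + 2)) = (X + 1) ^ m * (C A * X ^ 2 + C B * X + C β) := by
    have c2 : (C 2 : ℝ[X]) = 2 := rfl
    rw [hA, hB, hn]
    simp [TT, derivative_pow, c2]; ring
  rw [e, hyp_iff] at h1
  rcases h1 with h1 | h1
  · have := congrArg (eval 0) h1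
    simp at this; linarith
  · set s := √(4 * A * β - B ^ 2) with hs
    have hs0 : 0 < s := Real.sqrt_pos.2 hD
    have hs2 : (s : ℂ) ^ 2 = 4 * A * β - B ^ 2 := by
      exact_mod_cast Real.sq_sqrt hD.le
    have hz : (-(B : ℂ) + s * Complex.I) / (2 * A : ℝ) =
      ((-B / (2 * A) : ℝ) : ℂ) + (s / (2 * A) : ℝ) * Complex.I := by push_cast; ring
    have := h1 ((-(B : ℂ) + s * Complex.I) / (2 * A : ℝ)) (by
      simp only [map_mul, map_add, map_pow, aeval_X, aeval_C]
      apply mul_eq_zero_of_right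
      have : (A : ℂ) ≠ 0 := by exact_mod_cast hA0.ne'
      simp
      field_simp
      linear_combination (s : ℂ) ^ 2 * Complex.I_sq - hs2)
    rw [hz] at this
    have h5 : 0 < s / (2 * A) := by positivity
    simp only [Complex.add_im, Complex.ofReal_im, Complex.mul_im, Complex.ofReal_re, Complex.I_im, Complex.I_re] at this
    linarith

lemma nec4 {α β : ℝ} (h : ∀ p, Hyperbolic p → Hyperbolic (TT α β p)) : -1 ≤ α := by
  by_contra! ha
  have hb := nec3 h
  have hb0 : 0 ≤ β := by simpa using nec2 h 0
  set s := √(α ^ 2 - 4 * β) with hs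
  have hs2 : s ^ 2 = α ^ 2 - 4 * β := Real.sq_sqrt (by nlinarith)
  have hs0 : 0 ≤ s := Real.sqrt_nonneg _
  have hs1 : 1 < s := by nlinarith
  have hsle : s ≤ -α := abs_le_of_sq_le_sq' (by nlinarith) (by linarith) |>.2
  have hr : 0 ≤ (-α - s) / 2 := by linarith
  have h1 := Nat.floor_le hr
  have h2 := Nat.lt_floor_add_one ((-α - s) / 2)
  have h3 := nec2 h (⌊(-α - s) / 2⌋₊ + 1)
  push_cast at h3
  generalize (⌊(-α - s) / 2⌋₊ : ℝ) = t at *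
  have : 0 < (t + 1 - (-α - s) / 2) * ((-α + s) / 2 - (t + 1)) :=
    mul_pos (by linarith) (by linarith)
  nlinarith

theorem stmt_12 (α β : ℝ) :
    IsMultiplierSeqFor (fun k => X ^ k) (fun k => (k : ℝ) ^ 2 + α * k + β) ↔
      (-1 ≤ α ∧ 0 ≤ β ∧ β ≤ (α + 1) ^ 2 / 4) := by
  constructor
  · intro h
    have h' := TT_of_mult h
    exact ⟨nec4 h', by simpa using nec2 h' 0, nec3 h'⟩
  · rintro ⟨h1, h2, h3⟩ n a hp
    simp only [TT_sum]
    exact suff α β h1 h2 h3 _ hp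
end
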